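/- For every ε > 0 there exists a constant C > 0 such that for all integers n ≥ 1, Σ_{i=1}^{A_n} |θ_i| ≤ C·n^{2+ε}, where A_n := Σ_{k=1}^{n} φ(k), θ'_j := k̂(T^{j−1}(1/n, 1)) − 3 and θ_i := Σ_{j=1}^{i} θ'_j. -/

import Mathlib

/-- The BCZ map `T(a,b) = (b, ⌊(1+a)/b⌋·b − a)`. -/
noncomputable def bczT (p : ℝ × ℝ) : ℝ × ℝ :=
  (p.2, (⌊(1 + p.1) / p.2⌋ : ℝ) * p.2 - p.1)

/-- `k̂(a,b) = (⌊(1+a)/b⌋ + ⌊(1+b)/a⌋)/2`. -/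
noncomputable def khat (p : ℝ × ℝ) : ℝ :=
  ((⌊(1 + p.1) / p.2⌋ : ℝ) + (⌊(1 + p.2) / p.1⌋ : ℝ)) / 2

/-- The Farey triangle Ω. -/
def fareyTriangle : Set (ℝ × ℝ) :=
  {p | 0 < p.1 ∧ p.1 ≤ 1 ∧ 0 < p.2 ∧ p.2 ≤ 1 ∧ 1 < p.1 + p.2}

/-- An excursion of the BCZ map: points `p 0, …, p s` of Ω, consecutive under `T`,
with all intermediate x-coordinates larger than those of both endpoints. -/
def IsExcursion (p : ℕ → ℝ × ℝ) (s : ℕ) : Prop :=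
  1 ≤ s ∧ (∀ i ≤ s, p i ∈ fareyTriangle) ∧
  (∀ i < s, p (i + 1) = bczT (p i)) ∧
  (∀ i, 0 < i → i < s → (p 0).1 < (p i).1 ∧ (p s).1 < (p i).1)

/-- The golden ratio area Δ of the moduli space of excursions. -/
noncomputable def goldenArea : Set (ℝ × ℝ) :=
  {p | 0 < p.1 ∧ p.1 ≤ 1 ∧ 0 < p.2 ∧ p.2 ≤ 1 ∧
    (Real.sqrt 5 - 1) / 2 ≤ p.2 / p.1 ∧ p.2 / p.1 ≤ (Real.sqrt 5 + 1) / 2}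

/-- `A_n = Σ_{k=1}^n φ(k)`, the number of Farey fractions in `(0,1]` of order `n`. -/
def fareyLen (n : ℕ) : ℕ := ∑ k ∈ Finset.Icc 1 n, Nat.totient k

/-!
The orbit of `(1 / n, 1)` under the BCZ map runs once through the points `(a / n, b / n)`, where
`a, b` are the denominators of consecutive Farey fractions of order `n`. Along this orbit
`khat - 3` is a coboundary, apart from one jump in each period: it is the increment of the signed
length of the subtractive Euclidean algorithm on `(a, b)` minus half of an index that is at most
`2 * n / a`. Hence the sums `θ_i` telescope, and `∑ |θ_i|` is at most the total length of the
subtractive Euclidean algorithm over all pairs `(a, b)`, up to `O(n ^ 2)`. The steps of the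
algorithm on `(a, b)` are among the factorizations of the row `(a, b)` as `(x, y) M` with `M` a
nonnegative integer matrix of determinant `1`. Such a factorization is determined by `(x, y)` and
the first column of `M`, which amount to two lattice points under a hyperbola, so there are
`O((n * log n) ^ 2)` of them in total.
-/

open Function Set

/-! ### Transitive periodic orbits -/

section Orbit

variable {α : Type*} {f : α → α} {x : α}

lemma bijOn_iterate_range_minimalPeriod {s : Set α} (hmaps : MapsTo f s s) (hx : x ∈ f '' s)
    (horb : ∀ y ∈ s, ∃ j, f^[j] x = y) :
    BijOn (f^[·] x) (Finset.range (minimalPeriod f x)) s := by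
  obtain ⟨w, hw, rfl⟩ := hx
  have hper : f w ∈ periodicPts f := by
    obtain ⟨j, hj⟩ := horb w hw
    exact ⟨j + 1, j.succ_pos, by rw [IsPeriodicPt, IsFixedPt, iterate_succ_apply', hj]⟩
  refine ⟨fun j _ ↦ hmaps.iterate j (hmaps hw), ?_, fun y hy ↦ ?_⟩
  · simpa using iterate_injOn_Iio_minimalPeriod
  · obtain ⟨j, rfl⟩ := horb y hy
    exact ⟨j % minimalPeriod f (f w),
      by simpa using Nat.mod_lt _ (minimalPeriod_pos_of_mem_periodicPts hper),
      iterate_mod_minimalPeriod_eq⟩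

lemma minimalPeriod_eq_card {s : Finset α} (hmaps : MapsTo f s s) (hx : x ∈ f '' s)
    (horb : ∀ y ∈ s, ∃ j, f^[j] x = y) : minimalPeriod f x = s.card := by
  simpa using (bijOn_iterate_range_minimalPeriod hmaps hx horb).finsetCard_eq

lemma sum_Icc_minimalPeriod_iterate {M : Type*} [AddCancelCommMonoid M] (g : α → M) :
    ∑ i ∈ Finset.Icc 1 (minimalPeriod f x), g (f^[i] x) =
      ∑ i ∈ Finset.range (minimalPeriod f x), g (f^[i] x) := by
  have hshift := (Finset.sum_range_succ' (fun i ↦ g (f^[i] x)) (minimalPeriod f x)).symm.trans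
    (Finset.sum_range_succ _ _)
  rw [iterate_minimalPeriod, iterate_zero_apply] at hshift
  rw [← add_right_cancel hshift, ← Finset.Ico_add_one_right_eq_Icc, Finset.sum_Ico_eq_sum_range]
  simp [add_comm]

end Orbit

/-! ### The subtractive Euclidean algorithm -/

/-- The signed length of the subtractive Euclidean algorithm on `(a, b)`: each subtraction
`b ↦ b - a` counts `+1` and each subtraction `a ↦ a - b` counts `-1`. -/
def euclidBalance (a b : ℕ) : ℤ :=
  if 0 < a ∧ a < b then euclidBalance a (b - a) + 1
  else if 0 < b ∧ b < a then euclidBalance (a - b) b - 1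
  else 0
termination_by a + b

lemma euclidBalance_self (a : ℕ) : euclidBalance a a = 0 := by
  rw [euclidBalance]; simp

lemma euclidBalance_add_right {a b : ℕ} (ha : 0 < a) (hb : 0 < b) :
    euclidBalance a (b + a) = euclidBalance a b + 1 := by
  rw [euclidBalance, if_pos (by omega), Nat.add_sub_cancel]

lemma euclidBalance_add_left {a b : ℕ} (ha : 0 < a) (hb : 0 < b) :
    euclidBalance (a + b) b = euclidBalance a b - 1 := by
  rw [euclidBalance, if_neg (by omega), if_pos (by omega), Nat.add_sub_cancel]

lemma euclidBalance_one_left (m : ℕ) : euclidBalance 1 (m + 1) = m := by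
  induction m with
  | zero => exact euclidBalance_self 1
  | succ m ih => rw [euclidBalance_add_right one_pos m.succ_pos, ih, Nat.cast_succ]

lemma euclidBalance_sub_euclidBalance {a b c k : ℕ} (ha : 0 < a) (hb : 0 < b) (hc : 0 < c)
    (hk : a + c = k * b) :
    euclidBalance b c - euclidBalance a b = k - 3 + if b ∣ a then 1 else 0 := by
  obtain ⟨l, rfl⟩ : ∃ l, k = l + 1 := Nat.exists_eq_add_one.2 <| Nat.pos_of_ne_zero <| by
    rintro rfl; omega
  rw [add_one_mul] at hk
  by_cases hba : b < a
  · obtain ⟨a', rfl⟩ := Nat.exists_eq_add_of_le' hba.le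
    have := euclidBalance_sub_euclidBalance (a := a') (c := c) (k := l)
      (by omega) hb hc (by omega)
    rw [euclidBalance_add_left (by omega) hb]
    simp only [Nat.dvd_add_self_right]
    push_cast
    linarith
  by_cases hbc : b < c
  · obtain ⟨c', rfl⟩ := Nat.exists_eq_add_of_le' hbc.le
    have := euclidBalance_sub_euclidBalance (a := a) (c := c') (k := l)
      ha hb (by omega) (by omega)
    rw [euclidBalance_add_right hb (by omega)]
    push_cast
    linarith
  have hl : l < 2 := by
    by_contra! hl
    have := Nat.mul_le_mul_right b hl
    omega
  interval_cases l
  · obtain rfl : b = a + c := by omega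
    have hndvd : ¬ a + c ∣ a := Nat.not_dvd_of_pos_of_lt ha (by omega)
    have hright := euclidBalance_add_right ha hc
    rw [add_comm c a] at hright
    rw [euclidBalance_add_left ha hc, hright, if_neg hndvd]
    push_cast
    ring
  · obtain rfl : a = b := by omega
    obtain rfl : c = a := by omega
    simp [euclidBalance_self]
termination_by a + c

/-- `q` is an ancestor of `p` if `p = q M` (as row vectors) for a matrix `M` with entries in `ℕ`
and determinant `1`. The ancestors of `p` with positive entries include all the pairs that the
subtractive Euclidean algorithm started at `p` visits. -/
def IsEuclidAncestor (q p : ℕ × ℕ) : Prop :=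
  ∃ α β γ δ : ℕ, α * δ = β * γ + 1 ∧ p = (q.1 * α + q.2 * γ, q.1 * β + q.2 * δ)

namespace IsEuclidAncestor

variable {p q r : ℕ × ℕ}

protected lemma refl (p : ℕ × ℕ) : IsEuclidAncestor p p := ⟨1, 0, 0, 1, by simp⟩

protected lemma trans (hrq : IsEuclidAncestor r q) (hqp : IsEuclidAncestor q p) :
    IsEuclidAncestor r p := by
  obtain ⟨α, β, γ, δ, hdet, rfl⟩ := hrq
  obtain ⟨α', β', γ', δ', hdet', rfl⟩ := hqp
  refine ⟨α * α' + β * γ', α * β' + β * δ', γ * α' + δ * γ', γ * β' + δ * δ', ?_, ?_⟩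
  · zify at *
    linear_combination (α' * δ' - β' * γ' : ℤ) * hdet + hdet'
  · ext <;> dsimp only <;> ring

protected lemma le (h : IsEuclidAncestor q p) : q ≤ p := by
  obtain ⟨α, β, γ, δ, hdet, rfl⟩ := h
  have hpos : 0 < α * δ := by omega
  exact ⟨Nat.le_add_right_of_le (Nat.le_mul_of_pos_right _ (Nat.pos_of_mul_pos_right hpos)),
    Nat.le_add_left_of_le (Nat.le_mul_of_pos_right _ (Nat.pos_of_mul_pos_left hpos))⟩

lemma sub_right {a b : ℕ} (h : a ≤ b) : IsEuclidAncestor (a, b - a) (a, b) :=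
  ⟨1, 1, 0, 1, by simp, by ext <;> dsimp only <;> omega⟩

lemma sub_left {a b : ℕ} (h : b ≤ a) : IsEuclidAncestor (a - b, b) (a, b) :=
  ⟨1, 0, 1, 1, by simp, by ext <;> dsimp only <;> omega⟩

end IsEuclidAncestor

open scoped Classical in
/-- The ancestors of `p` with positive entries, which are finite in number because ancestors of
`p` are at most `p`. -/
noncomputable def euclidAncestors (p : ℕ × ℕ) : Finset (ℕ × ℕ) :=
  {q ∈ Finset.Icc 1 p.1 ×ˢ Finset.Icc 1 p.2 | IsEuclidAncestor q p}

lemma mem_euclidAncestors {p q : ℕ × ℕ} :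
    q ∈ euclidAncestors p ↔ 0 < q.1 ∧ 0 < q.2 ∧ IsEuclidAncestor q p := by
  simp only [euclidAncestors, Finset.mem_filter, Finset.mem_product, Finset.mem_Icc]
  refine ⟨fun h ↦ ⟨h.1.1.1, h.1.2.1, h.2⟩, fun h ↦ ?_⟩
  exact ⟨⟨⟨h.1, h.2.2.le.1⟩, ⟨h.2.1, h.2.2.le.2⟩⟩, h.2.2⟩

lemma card_euclidAncestors_lt {p q : ℕ × ℕ} (hp₁ : 0 < p.1) (hp₂ : 0 < p.2)
    (h : IsEuclidAncestor q p) (hne : q ≠ p) :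
    (euclidAncestors q).card < (euclidAncestors p).card := by
  refine Finset.card_lt_card <| (Finset.ssubset_iff_of_subset fun r hr ↦ ?_).2
    ⟨p, mem_euclidAncestors.2 ⟨hp₁, hp₂, .refl p⟩, fun hpq ↦ ?_⟩
  · obtain ⟨hr₁, hr₂, hrq⟩ := mem_euclidAncestors.1 hr
    exact mem_euclidAncestors.2 ⟨hr₁, hr₂, hrq.trans h⟩
  · exact hne (h.le.antisymm (mem_euclidAncestors.1 hpq).2.2.le)

lemma abs_euclidBalance_lt_card_euclidAncestors {a b : ℕ} (ha : 0 < a) (hb : 0 < b) :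
    |euclidBalance a b| < (euclidAncestors (a, b)).card := by
  fun_induction euclidBalance a b with
  | case1 a b h ih =>
    have := ih ha (by omega)
    have := card_euclidAncestors_lt ha hb (.sub_right h.2.le) (by simp; omega)
    have := abs_add_le (euclidBalance a (b - a)) 1
    rw [abs_one] at this
    omega
  | case2 a b _ h ih =>
    have := ih (by omega) hb
    have := card_euclidAncestors_lt ha hb (.sub_left h.2.le) (by simp; omega)
    have := abs_sub (euclidBalance (a - b) b) 1
    rw [abs_one] at this
    omega
  | case3 a b =>
    simpa using ⟨(a, b), mem_euclidAncestors.2 ⟨ha, hb, .refl _⟩⟩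

/-! ### Farey pairs -/

/-- The pairs of denominators of consecutive Farey fractions of order `n`. -/
def fareyPairs (n : ℕ) : Finset (ℕ × ℕ) :=
  {p ∈ Finset.Icc 1 n ×ˢ Finset.Icc 1 n | n < p.1 + p.2 ∧ p.1.Coprime p.2}

lemma mem_fareyPairs {n a b : ℕ} : (a, b) ∈ fareyPairs n ↔
    0 < a ∧ a ≤ n ∧ 0 < b ∧ b ≤ n ∧ n < a + b ∧ a.Coprime b := by
  simp [fareyPairs, Order.one_le_iff_pos, and_assoc]

lemma swap_mem_fareyPairs {n : ℕ} {p : ℕ × ℕ} (hp : p ∈ fareyPairs n) : p.swap ∈ fareyPairs n := by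
  obtain ⟨a, b⟩ := p
  obtain ⟨ha, han, hb, hbn, hab, hcop⟩ := mem_fareyPairs.1 hp
  exact mem_fareyPairs.2 ⟨hb, hbn, ha, han, by omega, hcop.symm⟩

lemma sum_fareyPairs_fst {M : Type*} [AddCommMonoid M] (n : ℕ) (g : ℕ → M) :
    ∑ p ∈ fareyPairs n, g p.1 = ∑ a ∈ Finset.Icc 1 n, a.totient • g a := by
  rw [fareyPairs, Finset.sum_filter, Finset.sum_product]
  refine Finset.sum_congr rfl fun a ha ↦ ?_
  dsimp only
  rw [← Finset.sum_filter, Finset.sum_const, ← Nat.filter_coprime_Ico_eq_totient a (n - a + 1)]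
  congr 2
  ext b
  simp only [Finset.mem_filter, Finset.mem_Icc, Finset.mem_Ico] at ha ⊢
  omega

lemma card_fareyPairs (n : ℕ) : (fareyPairs n).card = fareyLen n := by
  simpa [fareyLen] using sum_fareyPairs_fst n fun _ ↦ (1 : ℕ)

/-- The index `⌊(n + a) / b⌋` of a pair of denominators `(a, b)`. -/
def fareyIndex (n : ℕ) (p : ℕ × ℕ) : ℕ := (n + p.1) / p.2

/-- The BCZ map in terms of denominators. The subtraction does not truncate on `fareyPairs n`. -/
def fareyNext (n : ℕ) (p : ℕ × ℕ) : ℕ × ℕ := (p.2, fareyIndex n p * p.2 - p.1)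

section FareyNext

variable {n a b : ℕ} {p : ℕ × ℕ}

lemma exists_fareyNext_eq (h : (a, b) ∈ fareyPairs n) :
    ∃ c, fareyNext n (a, b) = (b, c) ∧ a + c = fareyIndex n (a, b) * b ∧ n < b + c ∧ c ≤ n := by
  obtain ⟨-, -, hb, hbn, -, -⟩ := mem_fareyPairs.1 h
  have hdiv : fareyIndex n (a, b) * b + (n + a) % b = n + a := Nat.div_add_mod' _ _
  have hmod : (n + a) % b < b := Nat.mod_lt _ hb
  exact ⟨_, rfl, by dsimp only; omega, by dsimp only; omega, by dsimp only; omega⟩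

lemma fareyNext_mem (hp : p ∈ fareyPairs n) : fareyNext n p ∈ fareyPairs n := by
  obtain ⟨a, b⟩ := p
  obtain ⟨c, hnext, hsum, hbc, hcn⟩ := exists_fareyNext_eq hp
  obtain ⟨-, -, hb, hbn, -, hcop⟩ := mem_fareyPairs.1 hp
  have hcop' : b.Coprime c := by
    refine Nat.eq_one_of_dvd_coprimes hcop ?_ (Nat.gcd_dvd_left b c)
    exact (Nat.dvd_add_left (Nat.gcd_dvd_right b c)).1
      (hsum ▸ (Nat.gcd_dvd_left b c).mul_left _)
  exact hnext ▸ mem_fareyPairs.2 ⟨hb, hbn, by omega, hcn, hbc, hcop'⟩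

lemma fareyIndex_swap_fareyNext (hp : p ∈ fareyPairs n) :
    fareyIndex n (fareyNext n p).swap = fareyIndex n p := by
  obtain ⟨a, b⟩ := p
  obtain ⟨c, hnext, hsum, -, -⟩ := exists_fareyNext_eq hp
  obtain ⟨-, han, -, -, hab, -⟩ := mem_fareyPairs.1 hp
  rw [hnext]
  refine Nat.div_eq_of_lt_le ?_ ?_ <;> dsimp only [Prod.swap_prod_mk] <;> grind

lemma fareyNext_swap_fareyNext (hp : p ∈ fareyPairs n) :
    fareyNext n (fareyNext n p).swap = p.swap := by
  have hindex := fareyIndex_swap_fareyNext hp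
  obtain ⟨a, b⟩ := p
  obtain ⟨c, hnext, hsum, -, -⟩ := exists_fareyNext_eq hp
  rw [hnext] at hindex ⊢
  rw [fareyNext, hindex]
  ext <;> dsimp only [Prod.swap_prod_mk]; omega

lemma exists_fareyNext_eq_mk (h : (a, b) ∈ fareyPairs n) :
    ∃ c, (c, a) ∈ fareyPairs n ∧ fareyNext n (c, a) = (a, b) ∧ ∃ k, c + b = k * a := by
  have hswap : (b, a) ∈ fareyPairs n := swap_mem_fareyPairs h
  obtain ⟨c, hnext, hsum, -, -⟩ := exists_fareyNext_eq hswap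
  have hinv := fareyNext_swap_fareyNext hswap
  have hmem := swap_mem_fareyPairs (fareyNext_mem hswap)
  rw [hnext] at hinv hmem
  exact ⟨c, hmem, hinv, _, by rw [add_comm, hsum]⟩

lemma one_self_mem_fareyPairs (hn : 1 ≤ n) : (1, n) ∈ fareyPairs n :=
  mem_fareyPairs.2 ⟨one_pos, hn, hn, le_rfl, by omega, Nat.coprime_one_left n⟩

/-- Here `u / a < v / b` are the consecutive fractions, and `n ^ 2 * u < N * a` says that
`u / a < N / n ^ 2`. The fraction before `u / a` has denominator `c` and is smaller by
`1 / (a * c) ≥ 1 / n ^ 2`, so one step back lowers `N` by one. -/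
lemma exists_iterate_fareyNext_eq_of_det {u v : ℕ} (N : ℕ) (h : (a, b) ∈ fareyPairs n)
    (hdet : v * a = u * b + 1) (hN : n ^ 2 * u < N * a) :
    ∃ j, (fareyNext n)^[j] (1, n) = (a, b) := by
  induction N generalizing a b u v with
  | zero => omega
  | succ N ih =>
    obtain ⟨ha, han, -, hbn, hab, -⟩ := mem_fareyPairs.1 h
    obtain rfl | hu := u.eq_zero_or_pos
    · obtain rfl : a = 1 := Nat.eq_one_of_mul_eq_one_left (by simpa using hdet)
      obtain rfl : b = n := by omega
      exact ⟨0, rfl⟩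
    obtain ⟨c, hmem, hnext, k, hk⟩ := exists_fareyNext_eq_mk h
    obtain ⟨hc, hcn, -⟩ := mem_fareyPairs.1 hmem
    have hprev : u * c + v * a = u * k * a + 1 := by
      linear_combination u * hk + hdet
    obtain ⟨w, hw⟩ : ∃ w, u * k = v + w := by
      refine Nat.exists_eq_add_of_le (Nat.le_of_mul_le_mul_right ?_ ha)
      have := Nat.mul_pos hu hc
      omega
    have hdet' : u * c = w * a + 1 := by
      rw [hw] at hprev
      linarith
    have hN' : n ^ 2 * w < N * c := by
      refine Nat.lt_of_mul_lt_mul_right (a := a) ?_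
      nlinarith [Nat.mul_le_mul hcn han, Nat.mul_lt_mul_of_pos_right hN hc]
    obtain ⟨j, hj⟩ := ih hmem hdet' hN'
    exact ⟨j + 1, by rw [iterate_succ_apply', hj, hnext]⟩

lemma exists_iterate_fareyNext_eq (hp : p ∈ fareyPairs n) :
    ∃ j, (fareyNext n)^[j] (1, n) = p := by
  obtain ⟨a, b⟩ := p
  obtain ⟨ha, -, hb, -, -, hcop⟩ := mem_fareyPairs.1 hp
  obtain ⟨u, v, hdet⟩ : ∃ u v, v * a = u * b + 1 := by
    obtain rfl | hb1 := Nat.eq_or_lt_of_le hb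
    · exact ⟨a - 1, 1, by omega⟩
    · obtain ⟨v, -, hv⟩ := Nat.exists_mul_mod_eq_one_of_coprime hcop hb1
      exact ⟨a * v / b, v, by rw [mul_comm v, ← hv, Nat.div_add_mod']⟩
  exact exists_iterate_fareyNext_eq_of_det (n ^ 2 * u + 1) hp hdet
    (Nat.lt_of_lt_of_le (Nat.lt_succ_self _) (Nat.le_mul_of_pos_right _ ha))

lemma one_self_mem_image_fareyNext (hn : 1 ≤ n) :
    (1, n) ∈ fareyNext n '' fareyPairs n := by
  obtain ⟨c, hmem, hnext, -⟩ := exists_fareyNext_eq_mk (one_self_mem_fareyPairs hn)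
  exact ⟨(c, 1), hmem, hnext⟩

lemma minimalPeriod_fareyNext (hn : 1 ≤ n) :
    minimalPeriod (fareyNext n) (1, n) = fareyLen n :=
  card_fareyPairs n ▸ minimalPeriod_eq_card (fun _ ↦ fareyNext_mem)
    (one_self_mem_image_fareyNext hn) fun _ ↦ exists_iterate_fareyNext_eq

lemma bijOn_iterate_fareyNext (hn : 1 ≤ n) :
    BijOn (fun j ↦ (fareyNext n)^[j] (1, n)) (Finset.range (fareyLen n)) (fareyPairs n) :=
  minimalPeriod_fareyNext hn ▸ bijOn_iterate_range_minimalPeriod (fun _ ↦ fareyNext_mem)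
    (one_self_mem_image_fareyNext hn) fun _ ↦ exists_iterate_fareyNext_eq

lemma sum_Icc_iterate_fareyNext {M : Type*} [AddCancelCommMonoid M] (hn : 1 ≤ n)
    (g : ℕ × ℕ → M) :
    ∑ i ∈ Finset.Icc 1 (fareyLen n), g ((fareyNext n)^[i] (1, n)) = ∑ p ∈ fareyPairs n, g p := by
  rw [← minimalPeriod_fareyNext hn, sum_Icc_minimalPeriod_iterate, minimalPeriod_fareyNext hn]
  have h := bijOn_iterate_fareyNext hn
  exact Finset.sum_nbij _ h.mapsTo h.injOn h.surjOn fun _ _ ↦ rfl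

lemma iterate_fareyNext_mem (hp : p ∈ fareyPairs n) (j : ℕ) :
    (fareyNext n)^[j] p ∈ fareyPairs n :=
  MapsTo.iterate (s := (fareyPairs n : Set (ℕ × ℕ))) (fun _ ↦ fareyNext_mem) j hp

lemma card_filter_iterate_fareyNext_snd_eq_one_le {i : ℕ} (hn : 1 ≤ n) (hi : i ≤ fareyLen n) :
    ((Finset.range i).filter fun j ↦ ((fareyNext n)^[j] (1, n)).2 = 1).card ≤ 1 := by
  have heq {p : ℕ × ℕ} (hp : p ∈ fareyPairs n) (h : p.2 = 1) : p = (n, 1) := by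
    obtain ⟨a, b⟩ := p
    obtain rfl : b = 1 := h
    obtain ⟨-, han, -, -, hab, -⟩ := mem_fareyPairs.1 hp
    simp; omega
  simp only [Finset.card_le_one, Finset.mem_filter, Finset.mem_range]
  intro j hj k hk
  have hmem := iterate_fareyNext_mem (one_self_mem_fareyPairs hn)
  exact (bijOn_iterate_fareyNext hn).injOn (by simp; omega) (by simp; omega)
    ((heq (hmem j) hj.2).trans (heq (hmem k) hk.2).symm)

end FareyNext

/-! ### The BCZ orbit of `(1 / n, 1)` -/

section BCZ

variable {n : ℕ} {p : ℕ × ℕ}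

/-- The point of the Farey triangle that represents a pair of denominators of order `n`. -/
noncomputable def fareyPoint (n : ℕ) (p : ℕ × ℕ) : ℝ × ℝ := (p.1 / n, p.2 / n)

lemma floor_one_add_div_div (hn : 1 ≤ n) (p : ℕ × ℕ) :
    ⌊(1 + (p.1 : ℝ) / n) / ((p.2 : ℝ) / n)⌋ = fareyIndex n p := by
  have hn0 : (n : ℝ) ≠ 0 := by positivity
  have hscale : (1 + (p.1 : ℝ) / n) / ((p.2 : ℝ) / n) = ((n + p.1 : ℕ) : ℝ) / p.2 := by
    rw [one_add_div hn0, div_div_div_cancel_right₀ hn0, Nat.cast_add]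
  rw [hscale, Int.floor_div_natCast, Int.floor_natCast, fareyIndex, Int.natCast_ediv]

lemma khat_fareyPoint (hn : 1 ≤ n) (p : ℕ × ℕ) :
    khat (fareyPoint n p) = ((fareyIndex n p : ℝ) + fareyIndex n p.swap) / 2 := by
  have h₁ := floor_one_add_div_div hn p
  have h₂ := floor_one_add_div_div hn p.swap
  dsimp only [Prod.fst_swap, Prod.snd_swap] at h₂
  simp only [khat, fareyPoint, h₁, h₂, Int.cast_natCast]

lemma bczT_fareyPoint (hp : p ∈ fareyPairs n) :
    bczT (fareyPoint n p) = fareyPoint n (fareyNext n p) := by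
  obtain ⟨a, b⟩ := p
  obtain ⟨ha, han, -⟩ := mem_fareyPairs.1 hp
  obtain ⟨c, hnext, hsum, -⟩ := exists_fareyNext_eq hp
  have hfloor := floor_one_add_div_div (ha.trans_le han) (a, b)
  have hsum' : (a : ℝ) + c = fareyIndex n (a, b) * b := by exact_mod_cast hsum
  dsimp only at hfloor
  simp only [bczT, fareyPoint, hnext, hfloor, Int.cast_natCast, Prod.mk.injEq, true_and]
  rw [← mul_div_assoc, ← hsum', ← sub_div, add_sub_cancel_left]

lemma iterate_bczT_fareyPoint (hp : p ∈ fareyPairs n) (j : ℕ) :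
    bczT^[j] (fareyPoint n p) = fareyPoint n ((fareyNext n)^[j] p) := by
  induction j with
  | zero => rfl
  | succ j ih =>
    rw [iterate_succ_apply', iterate_succ_apply', ih, bczT_fareyPoint (iterate_fareyNext_mem hp j)]

/-- A potential whose increments along the BCZ orbit are the terms `khat - 3`, except for a jump
at the pairs `(a, 1)`. -/
noncomputable def fareyPotential (n : ℕ) (p : ℕ × ℕ) : ℝ :=
  euclidBalance p.1 p.2 - (fareyIndex n p.swap : ℝ) / 2

lemma khat_fareyPoint_sub_three (hp : p ∈ fareyPairs n) :
    khat (fareyPoint n p) - 3 =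
      fareyPotential n (fareyNext n p) - fareyPotential n p - if p.2 = 1 then 1 else 0 := by
  have hindex := fareyIndex_swap_fareyNext hp
  have hmem := fareyNext_mem hp
  obtain ⟨a, b⟩ := p
  obtain ⟨ha, han, hb, -, -, hcop⟩ := mem_fareyPairs.1 hp
  obtain ⟨c, hnext, hsum, -⟩ := exists_fareyNext_eq hp
  rw [hnext] at hindex hmem
  have hdvd : b ∣ a ↔ b = 1 := ⟨Nat.eq_one_of_dvd_coprimes hcop.symm dvd_rfl, by rintro rfl; simp⟩
  have hbal : (euclidBalance b c : ℝ) - euclidBalance a b =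
      fareyIndex n (a, b) - 3 + if b = 1 then 1 else 0 := by
    have := euclidBalance_sub_euclidBalance ha hb (mem_fareyPairs.1 hmem).2.2.1 hsum
    simp only [hdvd] at this
    exact_mod_cast this
  rw [khat_fareyPoint (ha.trans_le han), hnext, fareyPotential, fareyPotential, hindex]
  linarith

lemma sum_range_khat_sub_three (hp : p ∈ fareyPairs n) (i : ℕ) :
    ∑ j ∈ Finset.range i, (khat (bczT^[j] (fareyPoint n p)) - 3) =
      fareyPotential n ((fareyNext n)^[i] p) - fareyPotential n p -
        ((Finset.range i).filter fun j ↦ ((fareyNext n)^[j] p).2 = 1).card := by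
  induction i with
  | zero => simp
  | succ i ih =>
    rw [Finset.sum_range_succ, ih, iterate_bczT_fareyPoint hp,
      khat_fareyPoint_sub_three (iterate_fareyNext_mem hp i), ← iterate_succ_apply' (fareyNext n),
      Finset.range_add_one, Finset.filter_insert]
    split_ifs <;> simp <;> ring

lemma fareyPotential_one_self (hn : 1 ≤ n) : fareyPotential n (1, n) = -1 := by
  obtain ⟨m, rfl⟩ := Nat.exists_eq_add_of_le' hn
  simp only [fareyPotential, fareyIndex, euclidBalance_one_left, Prod.swap_prod_mk, Nat.div_one]
  push_cast
  ring

lemma abs_fareyPotential_le (hp : p ∈ fareyPairs n) :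
    |fareyPotential n p| ≤ |(euclidBalance p.1 p.2 : ℝ)| + n / p.1 := by
  obtain ⟨a, b⟩ := p
  obtain ⟨-, -, -, hbn, -, -⟩ := mem_fareyPairs.1 hp
  have hindex : (fareyIndex n (b, a) : ℝ) / 2 ≤ n / a :=
    calc (fareyIndex n (b, a) : ℝ) / 2 ≤ ((n + b : ℕ) / a : ℝ) / 2 := by
          gcongr; exact Nat.cast_div_le
      _ ≤ ((n + n : ℕ) / a : ℝ) / 2 := by gcongr
      _ = n / a := by push_cast; ring
  have hindex0 : (0 : ℝ) ≤ (fareyIndex n (b, a) : ℝ) / 2 := by positivity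
  calc |fareyPotential n (a, b)|
      ≤ |(euclidBalance a b : ℝ)| + |(fareyIndex n (b, a) : ℝ) / 2| := abs_sub _ _
    _ ≤ |(euclidBalance a b : ℝ)| + n / a := by rw [abs_of_nonneg hindex0]; gcongr

lemma abs_sum_range_khat_sub_three_le {i : ℕ} (hn : 1 ≤ n) (hi : i ≤ fareyLen n) :
    |∑ j ∈ Finset.range i, (khat (bczT^[j] (1 / (n : ℝ), 1)) - 3)| ≤
      |fareyPotential n ((fareyNext n)^[i] (1, n))| + 1 := by
  have hstart : fareyPoint n (1, n) = (1 / (n : ℝ), 1) := by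
    have hn0 : (n : ℝ) ≠ 0 := by positivity
    simp [fareyPoint, hn0]
  have hcount : (((Finset.range i).filter
      fun j ↦ ((fareyNext n)^[j] (1, n)).2 = 1).card : ℝ) ≤ 1 := by
    exact_mod_cast card_filter_iterate_fareyNext_snd_eq_one_le hn hi
  rw [← hstart, sum_range_khat_sub_three (one_self_mem_fareyPairs hn),
    fareyPotential_one_self hn, sub_neg_eq_add, add_sub_assoc]
  refine (abs_add_le _ _).trans ?_
  gcongr
  rw [abs_of_nonneg (sub_nonneg.2 hcount)]
  exact sub_le_self _ (Nat.cast_nonneg _)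

end BCZ

/-! ### The average length of the subtractive Euclidean algorithm -/

/-- The lattice points `(x, y)` with `0 < x ≤ n` and `x * y ≤ n`, grouped by `x` to be counted. -/
def pairsUnderHyperbola (n : ℕ) : Finset (Σ _ : ℕ, ℕ) :=
  (Finset.Icc 1 n).sigma fun x ↦ Finset.range (n / x + 1)

lemma mk_mem_pairsUnderHyperbola {n x y : ℕ} (hx : 0 < x) (hxn : x ≤ n) (hxy : x * y ≤ n) :
    ⟨x, y⟩ ∈ pairsUnderHyperbola n := by
  simp only [pairsUnderHyperbola, Finset.mem_sigma, Finset.mem_Icc, Finset.mem_range,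
    Nat.lt_add_one_iff]
  exact ⟨⟨hx, hxn⟩, (Nat.le_div_iff_mul_le hx).2 (mul_comm x y ▸ hxy)⟩

lemma card_pairsUnderHyperbola_le (n : ℕ) :
    ((pairsUnderHyperbola n).card : ℝ) ≤ n * (2 + Real.log n) := by
  have hharm : ∑ x ∈ Finset.Icc 1 n, (x : ℝ)⁻¹ ≤ 1 + Real.log n := by
    simpa [harmonic_eq_sum_Icc] using harmonic_le_one_add_log n
  calc ((pairsUnderHyperbola n).card : ℝ)
      = ∑ x ∈ Finset.Icc 1 n, (((n / x : ℕ) : ℝ) + 1) := by simp [pairsUnderHyperbola]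
    _ ≤ ∑ x ∈ Finset.Icc 1 n, (n * (x : ℝ)⁻¹ + 1) := by
        gcongr with x
        exact Nat.cast_div_le
    _ = n * ∑ x ∈ Finset.Icc 1 n, (x : ℝ)⁻¹ + n := by
        simp [Finset.sum_add_distrib, Finset.mul_sum]
    _ ≤ n * (1 + Real.log n) + n := by gcongr
    _ = n * (2 + Real.log n) := by ring

lemma modEq_of_det_eq {x y α β γ δ β' δ' : ℤ} (h : α * δ = β * γ + 1) (h' : α * δ' = β' * γ + 1) :
    x * β + y * δ ≡ x * β' + y * δ' [ZMOD x * α + y * γ] :=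
  (Int.modEq_iff_dvd.2 ⟨β * δ' - β' * δ, by
    linear_combination (x * β' + y * δ') * h - (x * β + y * δ) * h'⟩).symm

lemma snd_eq_of_mem_fareyPairs_of_modEq {n a b b' : ℕ} (h : (a, b) ∈ fareyPairs n)
    (h' : (a, b') ∈ fareyPairs n) (hmod : b ≡ b' [ZMOD a]) : b = b' := by
  obtain ⟨-, -, -, hbn, hab, -⟩ := mem_fareyPairs.1 h
  obtain ⟨-, -, -, hbn', hab', -⟩ := mem_fareyPairs.1 h'
  have := Int.eq_zero_of_abs_lt_dvd hmod.dvd (by rw [abs_lt]; omega)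
  omega

/-- An ancestor `(x, y)` of `(a, b)` gives `a = x * α + y * γ`, and conversely `x, α, y, γ`
determine `a`, then `b` modulo `a`, and thus `b`, which is in `(n - a, n]`. -/
lemma sum_card_euclidAncestors_le (n : ℕ) :
    ∑ p ∈ fareyPairs n, (euclidAncestors p).card ≤ (pairsUnderHyperbola n).card ^ 2 := by
  rw [← Finset.card_sigma, sq, ← Finset.card_product]
  refine Finset.card_le_card_of_forall_subsingleton
    (fun (u : Σ _ : ℕ × ℕ, ℕ × ℕ) (v : (Σ _ : ℕ, ℕ) × (Σ _ : ℕ, ℕ)) ↦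
      u.2 = (v.1.1, v.2.1) ∧ ∃ β δ : ℕ, v.1.2 * δ = β * v.2.2 + 1 ∧
        u.1 = (v.1.1 * v.1.2 + v.2.1 * v.2.2, v.1.1 * β + v.2.1 * δ)) ?_ ?_
  · rintro ⟨p, x, y⟩ hu
    obtain ⟨hp, hxy⟩ := Finset.mem_sigma.1 hu
    obtain ⟨hx, hy, hanc⟩ := mem_euclidAncestors.1 hxy
    obtain ⟨hxp, hyp⟩ := hanc.le
    dsimp only at hp hx hy hanc
    obtain ⟨α, β, γ, δ, hdet, rfl⟩ := hanc
    obtain ⟨-, han, -, hbn, -, -⟩ := mem_fareyPairs.1 hp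
    dsimp only at hxp hyp han hbn
    exact ⟨(⟨x, α⟩, ⟨y, γ⟩), Finset.mem_product.2
      ⟨mk_mem_pairsUnderHyperbola hx (by omega) (by omega),
        mk_mem_pairsUnderHyperbola hy (by omega) (by omega)⟩, rfl, β, δ, hdet, rfl⟩
  · rintro ⟨⟨x, α⟩, ⟨y, γ⟩⟩ -
    rintro ⟨p, q⟩ ⟨hu, hq, β, δ, hdet, hp⟩ ⟨p', q'⟩ ⟨hu', hq', β', δ', hdet', hp'⟩
    dsimp only at hq hp hq' hp' hdet hdet'
    subst hq hp hq' hp'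
    have hb := snd_eq_of_mem_fareyPairs_of_modEq (Finset.mem_sigma.1 hu).1
      (Finset.mem_sigma.1 hu').1 (by
        push_cast
        exact modEq_of_det_eq (by exact_mod_cast hdet) (by exact_mod_cast hdet'))
    rw [hb]

lemma sum_abs_euclidBalance_add_one_le (n : ℕ) :
    ∑ p ∈ fareyPairs n, (|(euclidBalance p.1 p.2 : ℝ)| + 1) ≤ (n * (2 + Real.log n)) ^ 2 :=
  calc ∑ p ∈ fareyPairs n, (|(euclidBalance p.1 p.2 : ℝ)| + 1)
      ≤ ∑ p ∈ fareyPairs n, ((euclidAncestors p).card : ℝ) := by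
        gcongr with p hp
        obtain ⟨ha, -, hb, -⟩ := mem_fareyPairs.1 hp
        exact_mod_cast Int.add_one_le_of_lt (abs_euclidBalance_lt_card_euclidAncestors ha hb)
    _ ≤ ((pairsUnderHyperbola n).card : ℝ) ^ 2 := by exact_mod_cast sum_card_euclidAncestors_le n
    _ ≤ (n * (2 + Real.log n)) ^ 2 := by gcongr; exact card_pairsUnderHyperbola_le n

lemma sum_fareyPairs_div_fst_le (n : ℕ) :
    ∑ p ∈ fareyPairs n, (n : ℝ) / p.1 ≤ (n : ℝ) ^ 2 := by
  rw [sum_fareyPairs_fst n fun a ↦ (n : ℝ) / a]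
  calc ∑ a ∈ Finset.Icc 1 n, a.totient • ((n : ℝ) / a) ≤ ∑ _ ∈ Finset.Icc 1 n, (n : ℝ) := by
        gcongr with a ha
        have ha0 : (0 : ℝ) < a := by exact_mod_cast (Finset.mem_Icc.1 ha).1
        have htot : (a.totient : ℝ) ≤ a := by exact_mod_cast a.totient_le
        rw [nsmul_eq_mul, mul_div_left_comm]
        exact mul_le_of_le_one_right n.cast_nonneg ((div_le_one ha0).2 htot)
    _ = (n : ℝ) ^ 2 := by simp [sq]

lemma sum_abs_theta_le_log_sq {n : ℕ} (hn : 1 ≤ n) :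
    ∑ i ∈ Finset.Icc 1 (fareyLen n),
        |∑ j ∈ Finset.range i, (khat (bczT^[j] (1 / (n : ℝ), 1)) - 3)| ≤
      (n * (2 + Real.log n)) ^ 2 + (n : ℝ) ^ 2 :=
  calc _ ≤ ∑ i ∈ Finset.Icc 1 (fareyLen n), (|fareyPotential n ((fareyNext n)^[i] (1, n))| + 1) :=
        Finset.sum_le_sum fun i hi ↦
          abs_sum_range_khat_sub_three_le hn (Finset.mem_Icc.1 hi).2
    _ = ∑ p ∈ fareyPairs n, (|fareyPotential n p| + 1) :=
        sum_Icc_iterate_fareyNext hn fun p ↦ |fareyPotential n p| + 1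
    _ ≤ ∑ p ∈ fareyPairs n, ((|(euclidBalance p.1 p.2 : ℝ)| + 1) + n / p.1) := by
        refine Finset.sum_le_sum fun p hp ↦ ?_
        linarith [abs_fareyPotential_le hp]
    _ ≤ (n * (2 + Real.log n)) ^ 2 + (n : ℝ) ^ 2 := by
        rw [Finset.sum_add_distrib]
        exact add_le_add (sum_abs_euclidBalance_add_one_le n) (sum_fareyPairs_div_fst_le n)

lemma mul_two_add_log_sq_le {x ε : ℝ} (hx : 1 ≤ x) (hε : 0 < ε) :
    (x * (2 + Real.log x)) ^ 2 ≤ (2 + 2 / ε) ^ 2 * x ^ (2 + ε) := by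
  have hx0 : 0 < x := by linarith
  have hlog : 2 + Real.log x ≤ (2 + 2 / ε) * x ^ (ε / 2) :=
    calc 2 + Real.log x ≤ 2 * x ^ (ε / 2) + x ^ (ε / 2) / (ε / 2) :=
          add_le_add (le_mul_of_one_le_right zero_le_two (Real.one_le_rpow hx (by positivity)))
            (Real.log_le_rpow_div hx0.le (by positivity))
      _ = (2 + 2 / ε) * x ^ (ε / 2) := by field_simp
  have hlog0 := Real.log_nonneg hx
  calc (x * (2 + Real.log x)) ^ 2 ≤ (x * ((2 + 2 / ε) * x ^ (ε / 2))) ^ 2 := by gcongr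
    _ = (2 + 2 / ε) ^ 2 * (x ^ 2 * (x ^ (ε / 2)) ^ 2) := by ring
    _ = (2 + 2 / ε) ^ 2 * x ^ (2 + ε) := by
        rw [← Real.rpow_mul_natCast hx0.le, Real.rpow_add hx0, Real.rpow_two, Nat.cast_two,
          div_mul_cancel₀ ε two_ne_zero]

theorem sum_abs_theta_bound (ε : ℝ) (hε : 0 < ε) :
    ∃ C : ℝ, 0 < C ∧ ∀ n : ℕ, 1 ≤ n →
      ∑ i ∈ Finset.Icc 1 (fareyLen n),
          |∑ j ∈ Finset.range i, (khat (bczT^[j] (1 / (n : ℝ), 1)) - 3)| ≤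
        C * (n : ℝ) ^ (2 + ε) := by
  refine ⟨(2 + 2 / ε) ^ 2 + 1, by positivity, fun n hn ↦ ?_⟩
  have hn1 : (1 : ℝ) ≤ n := by exact_mod_cast hn
  have hsq : (n : ℝ) ^ 2 ≤ (n : ℝ) ^ (2 + ε) := by
    rw [← Real.rpow_two]
    exact Real.rpow_le_rpow_of_exponent_le hn1 (by linarith)
  calc _ ≤ (n * (2 + Real.log n)) ^ 2 + (n : ℝ) ^ 2 := sum_abs_theta_le_log_sq hn
    _ ≤ (2 + 2 / ε) ^ 2 * (n : ℝ) ^ (2 + ε) + (n : ℝ) ^ (2 + ε) :=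
        add_le_add (mul_two_add_log_sq_le hn1 hε) hsq
    _ = ((2 + 2 / ε) ^ 2 + 1) * (n : ℝ) ^ (2 + ε) := by ring
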